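/- arXiv:1710.03952 — 3 statements merged into one kernel-verified Lean document; each statement's English description precedes it below -/
import Mathlib

section
/- Let n ≥ 1 be an integer, let 0 < ε < π/2 and τ > ε. Let f be a nonnegative, not identically zero, sin^n-concave function on [0, τ] that attains its maximum at 0, and let C > 0 be chosen so that f(ε) = C·cos(ε)^n; set h(t) = C·cos(t)^n. Then τ ≤ π/2, and f(x) ≥ h(x) for all x ∈ [0, ε], while f(x) ≤ h(x) for all x ∈ [ε, τ]. -/
open Real Set

/-- A function `f` is `sin^N`-concave on a set `I ⊆ ℝ` if for all `x1, x2 ∈ I`,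
`f((x1+x2)/2)^{1/N} ≥ (f(x1)^{1/N} + f(x2)^{1/N}) / (2 cos(|x2 − x1|/2))`. -/
def SinConcaveOn (N : ℝ) (f : ℝ → ℝ) (I : Set ℝ) : Prop :=
  ∀ x1 ∈ I, ∀ x2 ∈ I,
    (f x1 ^ (1 / N) + f x2 ^ (1 / N)) / (2 * Real.cos (|x2 - x1| / 2))
      ≤ f ((x1 + x2) / 2) ^ (1 / N)

lemma aux_bound (g : ℝ → ℝ) (τ : ℝ)
    (hmid : ∀ m s, 0 ≤ m - s → m + s ≤ τ → 0 ≤ s → s < π / 2 →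
      g (m - s) + g (m + s) ≤ 2 * Real.cos s * g m)
    (h0 : 0 ≤ g 0) (hmax : ∀ x ∈ Icc (0 : ℝ) τ, g x ≤ g 0)
    (t : ℝ) (ht0 : 0 ≤ t) (htτ : t ≤ τ) (htπ : t < π) : g t ≤ g 0 * Real.cos t := by
  have key : ∀ k : ℕ, ∀ t : ℝ, 0 ≤ t → t ≤ τ → t < π →
      g t - g 0 * Real.cos t ≤ g 0 * t ^ 2 / 2 * (1 / 2) ^ k := by
    intro k
    induction k with
    | zero =>
      intro t h1 h2 _
      have a := hmax t ⟨h1, h2⟩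
      have b := Real.one_sub_sq_div_two_le_cos (x := t)
      have := mul_le_mul_of_nonneg_left b h0
      simp only [pow_zero]
      linarith
    | succ k ih =>
      intro t h1 h2 h3
      have a := hmid (t / 2) (t / 2) (by linarith) (by linarith) (by linarith) (by linarith)
      have b := ih (t / 2) (by linarith) (by linarith) (by linarith)
      rw [sub_self, add_halves] at a
      have c0 : 0 ≤ Real.cos (t / 2) :=
        Real.cos_nonneg_of_neg_pi_div_two_le_of_le (by linarith) (by linarith)
      have c1 := Real.cos_le_one (t / 2)
      have hc : Real.cos t = 2 * Real.cos (t / 2) ^ 2 - 1 := by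
        rw [← Real.cos_two_mul]; congr 1; ring
      have d := mul_le_mul_of_nonneg_left b c0
      have hB : 0 ≤ g 0 * (t / 2) ^ 2 / 2 * (1 / 2) ^ k := by positivity
      have e := mul_le_mul_of_nonneg_right c1 hB
      have : g 0 * t ^ 2 / 2 * (1 / 2) ^ (k + 1)
          = 2 * (g 0 * (t / 2) ^ 2 / 2 * (1 / 2) ^ k) := by ring
      rw [this, hc]
      nlinarith
  have lim : Filter.Tendsto (fun k : ℕ => g 0 * t ^ 2 / 2 * (1 / 2 : ℝ) ^ k)
      Filter.atTop (nhds (g 0 * t ^ 2 / 2 * 0)) :=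
    (tendsto_pow_atTop_nhds_zero_of_lt_one (by norm_num) (by norm_num)).const_mul _
  have := ge_of_tendsto' lim (fun k => key k t ht0 htτ htπ)
  linarith

lemma aux_mono (g : ℝ → ℝ) (τ : ℝ)
    (hmid : ∀ m s, 0 ≤ m - s → m + s ≤ τ → 0 ≤ s → s < π / 2 →
      g (m - s) + g (m + s) ≤ 2 * Real.cos s * g m)
    (hg : ∀ x ∈ Icc (0 : ℝ) τ, 0 ≤ g x) (c y : ℝ) (hc : 0 ≤ c) (hyτ : y ≤ τ) (hy : y < π / 2)
    (hc0 : c ≤ g 0) (hcy : c * Real.cos y ≤ g y) (x : ℝ) (hx0 : 0 ≤ x) (hxy : x ≤ y) :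
    c * Real.cos x ≤ g x := by
  have hcos : ∀ s, 0 ≤ s → s ≤ π / 4 → 2 / 3 ≤ Real.cos s := by
    intro s h1 h2
    have a : Real.cos (π / 4) ≤ Real.cos s :=
      Real.cos_le_cos_of_nonneg_of_le_pi h1 (by linarith [Real.pi_pos]) h2
    rw [Real.cos_pi_div_four] at a
    have : (4 / 3 : ℝ) ≤ √2 := Real.le_sqrt_of_sq_le (by norm_num)
    linarith
  have hadd : ∀ m s, Real.cos (m - s) + Real.cos (m + s) = 2 * Real.cos s * Real.cos m := by
    intro m s
    rw [Real.cos_sub, Real.cos_add]; ring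
  have key : ∀ k : ℕ, ∀ x : ℝ, 0 ≤ x → x ≤ y →
      c * Real.cos x - g x ≤ c * (3 / 4) ^ k := by
    intro k
    induction k with
    | zero =>
      intro x h1 h2
      have a := hg x ⟨h1, by linarith⟩
      have := mul_le_mul_of_nonneg_left (Real.cos_le_one x) hc
      simp only [pow_zero]
      linarith
    | succ k ih =>
      intro x h1 h2
      have hB : 0 ≤ c * (3 / 4) ^ k := by positivity
      have fin : ∀ s, 0 ≤ s → s ≤ π / 4 →
          2 * Real.cos s * (c * Real.cos x - g x) ≤ c * (3 / 4) ^ k →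
          c * Real.cos x - g x ≤ c * (3 / 4) ^ (k + 1) := by
        intro s s0 s1 H
        have h3 := hcos s s0 s1
        have : c * (3 / 4) ^ (k + 1) = 3 / 4 * (c * (3 / 4) ^ k) := by ring
        rw [this]
        by_contra hcon
        push Not at hcon
        have hp : 0 < c * Real.cos x - g x := by linarith
        have := mul_le_mul_of_nonneg_right h3 hp.le
        linarith
      rcases le_total x (y / 2) with hh | hh
      · have a := hmid x x (by linarith) (by linarith) h1 (by linarith)
        have b := ih (x + x) (by linarith) (by linarith)
        have d := hadd x x
        rw [sub_self] at a d
        rw [Real.cos_zero] at d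
        apply fin x h1 (by linarith)
        have : 2 * Real.cos x * (c * Real.cos x - g x)
          = c * (2 * Real.cos x * Real.cos x) - 2 * Real.cos x * g x := by ring
        rw [this, ← d]
        linarith
      · have a := hmid x (y - x) (by linarith) (by linarith) (by linarith) (by linarith)
        have b := ih (x - (y - x)) (by linarith) (by linarith)
        have d := hadd x (y - x)
        rw [add_sub_cancel] at a d
        apply fin (y - x) (by linarith) (by linarith)
        have : 2 * Real.cos (y - x) * (c * Real.cos x - g x)
          = c * (2 * Real.cos (y - x) * Real.cos x) - 2 * Real.cos (y - x) * g x := by ring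
        rw [this, ← d]
        linarith
  have lim : Filter.Tendsto (fun k : ℕ => c * (3 / 4 : ℝ) ^ k)
      Filter.atTop (nhds (c * 0)) :=
    (tendsto_pow_atTop_nhds_zero_of_lt_one (by norm_num) (by norm_num)).const_mul _
  have := ge_of_tendsto' lim (fun k => key k x hx0 hxy)
  linarith

theorem stmt_0 (n : ℕ) (hn : 1 ≤ n) (ε τ : ℝ) (hε : 0 < ε) (hεπ : ε < π / 2)
    (hτε : ε < τ) (hτπ : τ ≤ π)
    (f : ℝ → ℝ) (hf0 : ∀ x ∈ Icc (0 : ℝ) τ, 0 ≤ f x)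
    (hfne : ∃ x ∈ Icc (0 : ℝ) τ, f x ≠ 0)
    (hconc : SinConcaveOn n f (Icc 0 τ))
    (hmax : ∀ x ∈ Icc (0 : ℝ) τ, f x ≤ f 0)
    (C : ℝ) (hC : 0 < C) (hCε : f ε = C * Real.cos ε ^ n)
    (h : ℝ → ℝ) (hdef : ∀ t, h t = C * Real.cos t ^ n) :
    τ ≤ π / 2 ∧ (∀ x ∈ Icc 0 ε, h x ≤ f x) ∧ ∀ x ∈ Icc ε τ, f x ≤ h x := by
  have hn0 : n ≠ 0 := by omega
  have hcε : 0 < Real.cos ε := Real.cos_pos_of_mem_Ioo ⟨by linarith, hεπ⟩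
  have hfε : 0 < f ε := by rw [hCε]; positivity
  have hf00 : 0 < f 0 := lt_of_lt_of_le hfε (hmax ε ⟨hε.le, hτε.le⟩)
  obtain ⟨g, hgdef⟩ : ∃ g : ℝ → ℝ, ∀ x, g x = f x ^ (1 / (n : ℝ)) := ⟨_, fun _ => rfl⟩
  have hgn : ∀ x ∈ Icc (0 : ℝ) τ, g x ^ n = f x := by
    intro x hx
    rw [hgdef, one_div]
    exact Real.rpow_inv_natCast_pow (hf0 x hx) hn0
  have hg : ∀ x ∈ Icc (0 : ℝ) τ, 0 ≤ g x := by
    intro x hx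
    rw [hgdef]
    exact Real.rpow_nonneg (hf0 x hx) _
  have hgmax : ∀ x ∈ Icc (0 : ℝ) τ, g x ≤ g 0 := by
    intro x hx
    rw [hgdef, hgdef]
    exact Real.rpow_le_rpow (hf0 x hx) (hmax x hx) (by positivity)
  have hg0 : 0 < g 0 := by rw [hgdef]; exact Real.rpow_pos_of_pos hf00 _
  have hgε : 0 < g ε := by rw [hgdef]; exact Real.rpow_pos_of_pos hfε _
  have hmid : ∀ m s, 0 ≤ m - s → m + s ≤ τ → 0 ≤ s → s < π / 2 →
      g (m - s) + g (m + s) ≤ 2 * Real.cos s * g m := by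
    intro m s h1 h2 h3 h4
    have a := hconc (m - s) ⟨h1, by linarith⟩ (m + s) ⟨by linarith, h2⟩
    have e1 : |m + s - (m - s)| / 2 = s := by
      rw [show m + s - (m - s) = 2 * s by ring, abs_of_nonneg (by linarith)]; ring
    have e2 : (m - s + (m + s)) / 2 = m := by ring
    rw [e1, e2, ← hgdef, ← hgdef, ← hgdef] at a
    have hcs : 0 < Real.cos s := Real.cos_pos_of_mem_Ioo ⟨by linarith, h4⟩
    rw [div_le_iff₀ (by positivity)] at a
    linarith
  have hbound := aux_bound g τ hmid hg0.le hgmax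
  have hmono := aux_mono g τ hmid hg
  have hτ2 : τ ≤ π / 2 := by
    by_contra hcon
    push Not at hcon
    have a := hbound ((π / 2 + τ) / 2) (by linarith) (by linarith) (by linarith)
    have b := hg ((π / 2 + τ) / 2) ⟨by linarith, by linarith⟩
    have d : Real.cos ((π / 2 + τ) / 2) < 0 :=
      Real.cos_neg_of_pi_div_two_lt_of_lt (by linarith) (by linarith)
    nlinarith
  obtain ⟨c, hc⟩ : ∃ c, c = g ε / Real.cos ε := ⟨_, rfl⟩
  have hcpos : 0 < c := by rw [hc]; positivity
  have hcg : c * Real.cos ε = g ε := by rw [hc]; field_simp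
  have hcn : c ^ n = C := by
    rw [hc, div_pow, hgn ε ⟨hε.le, hτε.le⟩, hCε]; field_simp
  have hh : ∀ x, h x = (c * Real.cos x) ^ n := by
    intro x; rw [hdef, mul_pow, hcn]
  refine ⟨hτ2, ?_, ?_⟩
  · rintro x ⟨hx0, hxε⟩
    have a := hmono c ε hcpos.le hτε.le hεπ
      (by rw [hc, div_le_iff₀ hcε]; exact hbound ε hε.le hτε.le (by linarith)) hcg.le x hx0 hxε
    have d : 0 ≤ Real.cos x :=
      Real.cos_nonneg_of_neg_pi_div_two_le_of_le (by linarith) (by linarith)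
    rw [hh, ← hgn x ⟨hx0, by linarith⟩]
    exact pow_le_pow_left₀ (by positivity) a n
  · rintro x ⟨hxε, hxτ⟩
    have hxI : x ∈ Icc (0 : ℝ) τ := ⟨by linarith, hxτ⟩
    have hb := hbound x hxI.1 hxτ (by linarith)
    rw [hh, ← hgn x hxI]
    apply pow_le_pow_left₀ (hg x hxI)
    rcases lt_or_ge x (π / 2) with hlt | hge
    · have d : 0 < Real.cos x := Real.cos_pos_of_mem_Ioo ⟨by linarith, hlt⟩
      have a := hmono (g x / Real.cos x) x (div_nonneg (hg x hxI) d.le) hxτ hlt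
        (by rw [div_le_iff₀ d]; exact hb) (by rw [div_mul_cancel₀ _ d.ne']) ε hε.le hxε
      rw [← hcg] at a
      have := le_of_mul_le_mul_right a hcε
      rwa [div_le_iff₀ d] at this
    · have : x = π / 2 := by linarith
      rw [this, Real.cos_pi_div_two] at hb ⊢
      linarith
end

section
/- Let m and n be positive integers and let I ⊆ ℝ be an interval with length(I) ≤ π. If f is a nonnegative sin^m-concave function on I and g is a nonnegative sin^n-concave function on I, then the product f·g is sin^{m+n}-concave on I. -/
open Real Set

theorem holder_two (s t : ℝ) (hs : 0 < s) (ht : 0 < t) (hst : s + t = 1)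
    (x1 x2 y1 y2 : ℝ) (hx1 : 0 ≤ x1) (hx2 : 0 ≤ x2) (hy1 : 0 ≤ y1) (hy2 : 0 ≤ y2) :
    x1 ^ s * y1 ^ t + x2 ^ s * y2 ^ t ≤ (x1 + x2) ^ s * (y1 + y2) ^ t := by
  rcases (add_nonneg hx1 hx2).eq_or_lt with hA | hA
  · have h1 : x1 = 0 := by linarith
    have h2 : x2 = 0 := by linarith
    subst h1 h2
    simp [Real.zero_rpow hs.ne']
  rcases (add_nonneg hy1 hy2).eq_or_lt with hB | hB
  · have h1 : y1 = 0 := by linarith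
    have h2 : y2 = 0 := by linarith
    subst h1 h2
    simp [Real.zero_rpow ht.ne']
  have h1 := Real.geom_mean_le_arith_mean2_weighted hs.le ht.le
    (div_nonneg hx1 hA.le) (div_nonneg hy1 hB.le) hst
  have h2 := Real.geom_mean_le_arith_mean2_weighted hs.le ht.le
    (div_nonneg hx2 hA.le) (div_nonneg hy2 hB.le) hst
  have hx : x1 / (x1 + x2) + x2 / (x1 + x2) = 1 := by field_simp
  have hy : y1 / (y1 + y2) + y2 / (y1 + y2) = 1 := by field_simp
  have h3 : (x1 / (x1 + x2)) ^ s * (y1 / (y1 + y2)) ^ t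
      + (x2 / (x1 + x2)) ^ s * (y2 / (y1 + y2)) ^ t ≤ 1 := by
    have e : s * (x1 / (x1 + x2)) + t * (y1 / (y1 + y2))
      + (s * (x2 / (x1 + x2)) + t * (y2 / (y1 + y2))) = 1 := by
      linear_combination s * hx + t * hy + hst
    linarith
  rw [Real.div_rpow hx1 hA.le, Real.div_rpow hx2 hA.le, Real.div_rpow hy1 hB.le,
    Real.div_rpow hy2 hB.le, div_mul_div_comm, div_mul_div_comm, ← add_div,
    div_le_one (by positivity)] at h3
  exact h3

theorem stmt_3 (m n : ℕ) (hm : 0 < m) (hn : 0 < n)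
    (I : Set ℝ) (hI : I.OrdConnected) (hIπ : Metric.diam I ≤ π)
    (f g : ℝ → ℝ) (hf0 : ∀ x ∈ I, 0 ≤ f x) (hg0 : ∀ x ∈ I, 0 ≤ g x)
    (hf : SinConcaveOn m f I) (hg : SinConcaveOn n g I) :
    SinConcaveOn (m + n) (fun x => f x * g x) I := by
  intro x1 h1 x2 h2
  have hmid : (x1 + x2) / 2 ∈ I := by
    rcases le_total x1 x2 with h | h
    · exact hI.out h1 h2 ⟨by linarith, by linarith⟩
    · exact hI.out h2 h1 ⟨by linarith, by linarith⟩
  have hF := hf x1 h1 x2 h2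
  have hG := hg x1 h1 x2 h2
  have hm' : (0 : ℝ) < m := by exact_mod_cast hm
  have hn' : (0 : ℝ) < n := by exact_mod_cast hn
  have key : ∀ x ∈ I, (f x * g x) ^ (1 / ((m : ℝ) + n)) =
      (f x ^ (1 / (m : ℝ))) ^ ((m : ℝ) / (m + n)) *
        (g x ^ (1 / (n : ℝ))) ^ ((n : ℝ) / (m + n)) := by
    intro x hx
    rw [Real.mul_rpow (hf0 x hx) (hg0 x hx), ← Real.rpow_mul (hf0 x hx),
      ← Real.rpow_mul (hg0 x hx)]
    congr 2 <;> field_simp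
  beta_reduce
  rw [key _ h1, key _ h2, key _ hmid]
  have n1 := Real.rpow_nonneg (hf0 _ h1) (1 / (m : ℝ))
  have n2 := Real.rpow_nonneg (hf0 _ h2) (1 / (m : ℝ))
  have n3 := Real.rpow_nonneg (hf0 _ hmid) (1 / (m : ℝ))
  have k1 := Real.rpow_nonneg (hg0 _ h1) (1 / (n : ℝ))
  have k2 := Real.rpow_nonneg (hg0 _ h2) (1 / (n : ℝ))
  have k3 := Real.rpow_nonneg (hg0 _ hmid) (1 / (n : ℝ))
  generalize f x1 ^ (1 / (m : ℝ)) = a1 at *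
  generalize f x2 ^ (1 / (m : ℝ)) = a2 at *
  generalize f ((x1 + x2) / 2) ^ (1 / (m : ℝ)) = a at *
  generalize g x1 ^ (1 / (n : ℝ)) = b1 at *
  generalize g x2 ^ (1 / (n : ℝ)) = b2 at *
  generalize g ((x1 + x2) / 2) ^ (1 / (n : ℝ)) = b at *
  have hs : 0 < (m : ℝ) / (m + n) := by positivity
  have ht : 0 < (n : ℝ) / (m + n) := by positivity
  have hst : (m : ℝ) / (m + n) + (n : ℝ) / (m + n) = 1 := by field_simp
  generalize (m : ℝ) / (m + n) = s at *
  generalize (n : ℝ) / (m + n) = t at *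
  generalize 2 * Real.cos (|x2 - x1| / 2) = c at *
  rcases le_or_gt c 0 with hc | hc
  · exact (div_nonpos_of_nonneg_of_nonpos (by positivity) hc).trans (by positivity)
  · rw [div_le_iff₀ hc] at *
    calc _ ≤ (a1 + a2) ^ s * (b1 + b2) ^ t := holder_two s t hs ht hst _ _ _ _ n1 n2 k1 k2
      _ ≤ (a * c) ^ s * (b * c) ^ t := by gcongr
      _ = a ^ s * b ^ t * (c ^ s * c ^ t) := by
        rw [Real.mul_rpow n3 hc.le, Real.mul_rpow k3 hc.le]; ring
      _ = a ^ s * b ^ t * c := by rw [← Real.rpow_add hc, hst, Real.rpow_one]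
end

section
/- Let N ≥ 1 be a real number, let I ⊆ ℝ be a closed interval with length(I) ≤ π, and let ν be a probability measure on I whose density with respect to Lebesgue measure is a continuous sin^N-concave function. Let ν₁ be the probability measure on I₁ = [−π/2, π/2] with density C₁·cos(t)^N, where C₁ > 0 is the normalizing constant. Then for all κ1, κ2 ∈ [0,1] with κ1 ≤ 1/2 and κ2 ≥ 1/2: Sep((I, ν), κ1, κ2) ≤ Sep((I₁, ν₁), κ1, κ2). -/
open Real Set MeasureTheory

/-- The separation distance `Sep((I,ν),κ1,κ2)`: the supremum of those `δ ≥ 0` for which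
there exist measurable subsets `A1, A2 ⊆ I` with `ν(Ai) ≥ κi` and `dist(A1,A2) ≥ δ`. -/
noncomputable def sep (ν : Measure ℝ) (I : Set ℝ) (κ1 κ2 : ℝ) : ℝ :=
  sSup {δ : ℝ | 0 ≤ δ ∧ ∃ A1 A2 : Set ℝ, MeasurableSet A1 ∧ MeasurableSet A2 ∧
    A1 ⊆ I ∧ A2 ⊆ I ∧ ENNReal.ofReal κ1 ≤ ν A1 ∧ ENNReal.ofReal κ2 ≤ ν A2 ∧
    ∀ a1 ∈ A1, ∀ a2 ∈ A2, δ ≤ |a1 - a2|}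



lemma three_pt (h : ℝ → ℝ) (w x y : ℝ) (hwx : w < x) (hxy : x < y) (hπ : y - w < π)
    (hc : ContinuousOn h (Icc w y))
    (hm : ∀ x1 ∈ Icc w y, ∀ x2 ∈ Icc w y, x1 ≤ x2 →
      h x1 + h x2 ≤ 2 * cos ((x2 - x1) / 2) * h ((x1 + x2) / 2)) :
    sin (y - x) * h w + sin (x - w) * h y ≤ sin (y - w) * h x := by
  have hs : 0 < sin (y - w) := sin_pos_of_pos_of_lt_pi (by linarith) hπ
  obtain ⟨c, hcdef⟩ : ∃ c : ℝ → ℝ, c = fun t => cos (t - (w + y) / 2) := ⟨_, rfl⟩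
  have hcc : Continuous c := by rw [hcdef]; fun_prop
  have hcpos : ∀ t ∈ Icc w y, 0 < c t := by
    intro t ht
    rw [hcdef]
    exact cos_pos_of_mem_Ioo ⟨by linarith [ht.1], by linarith [ht.2]⟩
  obtain ⟨D, hD⟩ : ∃ D : ℝ → ℝ,
    D = fun t => sin (y - w) * h t - sin (y - t) * h w - sin (t - w) * h y := ⟨_, rfl⟩
  have hDc : ContinuousOn D (Icc w y) := by rw [hD]; fun_prop
  have hDm : ∀ x1 ∈ Icc w y, ∀ x2 ∈ Icc w y, x1 ≤ x2 →
      D x1 + D x2 ≤ 2 * cos ((x2 - x1) / 2) * D ((x1 + x2) / 2) := by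
    intro x1 h1 x2 h2 h12
    have := mul_le_mul_of_nonneg_left (hm x1 h1 x2 h2 h12) hs.le
    have e1 : sin (y - x1) + sin (y - x2) = 2 * cos ((x2 - x1) / 2) * sin (y - (x1 + x2) / 2) := by
      have a1 : y - x1 = (y - (x1 + x2) / 2) + (x2 - x1) / 2 := by ring
      have a2 : y - x2 = (y - (x1 + x2) / 2) - (x2 - x1) / 2 := by ring
      rw [a1, a2, sin_add _ ((x2 - x1) / 2), sin_sub _ ((x2 - x1) / 2)]; ring
    have e2 : sin (x1 - w) + sin (x2 - w) = 2 * cos ((x2 - x1) / 2) * sin ((x1 + x2) / 2 - w) := by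
      have a1 : x1 - w = ((x1 + x2) / 2 - w) - (x2 - x1) / 2 := by ring
      have a2 : x2 - w = ((x1 + x2) / 2 - w) + (x2 - x1) / 2 := by ring
      rw [a1, a2, sin_add _ ((x2 - x1) / 2), sin_sub _ ((x2 - x1) / 2)]; ring
    rw [hD]
    linear_combination this - h w * e1 - h y * e2
  suffices 0 ≤ D x by rw [hD] at this; linarith
  by_contra hneg
  push Not at hneg
  have hec : ContinuousOn (fun t => D t / c t) (Icc w y) :=
    hDc.div hcc.continuousOn (fun t ht => (hcpos t ht).ne')
  have hxI : x ∈ Icc w y := ⟨hwx.le, hxy.le⟩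
  obtain ⟨z0, hz0, hmin⟩ := isCompact_Icc.exists_isMinOn ⟨x, hxI⟩ hec
  obtain ⟨m, hmdef⟩ : ∃ m, m = D z0 / c z0 := ⟨_, rfl⟩
  have hmle : ∀ t ∈ Icc w y, m * c t ≤ D t := by
    intro t ht
    rw [← le_div_iff₀ (hcpos t ht), hmdef]
    exact hmin ht
  have hm0 : m < 0 := by
    by_contra hh
    push Not at hh
    have := hmle x hxI
    have := mul_nonneg hh (hcpos x hxI).le
    linarith
  have hKc : IsCompact (Icc w y ∩ (fun t => D t / c t) ⁻¹' {m}) := by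
    apply isCompact_Icc.of_isClosed_subset _ inter_subset_left
    exact hec.preimage_isClosed_of_isClosed isClosed_Icc isClosed_singleton
  obtain ⟨z, ⟨hzI, hzm⟩, hzl⟩ := hKc.exists_isLeast ⟨z0, hz0, by simp [hmdef]⟩
  have hzm' : D z = m * c z := by
    have : D z / c z = m := hzm
    rw [← this]; field_simp [(hcpos z hzI).ne']
  have hDw : D w = 0 := by simp [hD]
  have hDy : D y = 0 := by simp [hD]
  have hzneg : D z < 0 := by rw [hzm']; exact mul_neg_of_neg_of_pos hm0 (hcpos z hzI)
  have hzw : w < z := lt_of_le_of_ne hzI.1 (by rintro rfl; linarith)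
  have hzy : z < y := lt_of_le_of_ne hzI.2 (by rintro rfl; linarith)
  obtain ⟨ε, hε, h1, h2⟩ : ∃ ε > 0, w ≤ z - ε ∧ z + ε ≤ y := by
    refine ⟨min (z - w) (y - z), lt_min (by linarith) (by linarith), ?_, ?_⟩
    · linarith [min_le_left (z - w) (y - z)]
    · linarith [min_le_right (z - w) (y - z)]
  have i1 : z - ε ∈ Icc w y := ⟨h1, by linarith⟩
  have i2 : z + ε ∈ Icc w y := ⟨by linarith, h2⟩
  have key := hDm _ i1 _ i2 (by linarith)
  rw [show (z + ε - (z - ε)) / 2 = ε by ring, show (z - ε + (z + ε)) / 2 = z by ring, hzm'] at key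
  have e3 : c (z - ε) + c (z + ε) = 2 * cos ε * c z := by
    rw [hcdef]
    have a1 : z - ε - (w + y) / 2 = (z - (w + y) / 2) - ε := by ring
    have a2 : z + ε - (w + y) / 2 = (z - (w + y) / 2) + ε := by ring
    simp only [a1, a2, cos_add, cos_sub]; ring
  have l1 := hmle _ i1
  have l2 := hmle _ i2
  have e4 : D (z - ε) = m * c (z - ε) := by
    apply le_antisymm _ l1
    linear_combination key + l2 - m * e3
  have : z ≤ z - ε := hzl ⟨i1, by
    show D (z - ε) / c (z - ε) = m
    rw [e4]; field_simp [(hcpos _ i1).ne']⟩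
  linarith

lemma support_exists (h : ℝ → ℝ) (a b x : ℝ) (hax : a < x) (hxb : x < b) (hπ : b - a ≤ π)
    (hc : Continuous h)
    (hm : ∀ x1 ∈ Icc a b, ∀ x2 ∈ Icc a b, x1 ≤ x2 → x2 - x1 < π →
      h x1 + h x2 ≤ 2 * cos ((x2 - x1) / 2) * h ((x1 + x2) / 2)) :
    ∃ k, ∀ t ∈ Ioo a b, h t ≤ h x * cos (t - x) + k * sin (t - x) := by
  let q : ℝ → ℝ := fun t => (h t - h x * cos (t - x)) / sin (t - x)
  have hq : ∀ w ∈ Ioo a x, ∀ y ∈ Ioo x b, q y ≤ q w := by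
    intro w hw y hy
    have h3 := three_pt h w x y hw.2 hy.1 (by linarith [hw.1, hy.2]) hc.continuousOn (by
      intro x1 h1 x2 h2 h12
      exact hm x1 ⟨by linarith [h1.1, hw.1], by linarith [h1.2, hy.2]⟩ x2
        ⟨by linarith [h2.1, hw.1], by linarith [h2.2, hy.2]⟩ h12
        (by linarith [h1.1, h2.2, hw.1, hy.2]))
    have s1 : 0 < sin (y - x) := sin_pos_of_pos_of_lt_pi (by linarith [hy.1]) (by linarith [hy.2])
    have s2 : 0 < sin (x - w) := sin_pos_of_pos_of_lt_pi (by linarith [hw.2]) (by linarith [hw.1])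
    have s3 : sin (w - x) = - sin (x - w) := by rw [← sin_neg]; congr 1; ring
    have s4 : cos (w - x) = cos (x - w) := by rw [← cos_neg]; congr 1; ring
    have s5 : sin (y - w) = sin (y - x) * cos (x - w) + cos (y - x) * sin (x - w) := by
      rw [← sin_add]; congr 1; ring
    simp only [q]
    rw [s3, s4, div_neg, ← neg_div, div_le_div_iff₀ s1 s2]
    rw [s5] at h3
    linarith
  refine ⟨sSup (q '' Ioo x b), ?_⟩
  have hne : (q '' Ioo x b).Nonempty := ⟨_, mem_image_of_mem q (⟨by linarith, by linarith⟩ : (x + b) / 2 ∈ Ioo x b)⟩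
  have hbdd : BddAbove (q '' Ioo x b) := by
    refine ⟨q ((a + x) / 2), ?_⟩
    rintro _ ⟨y, hy, rfl⟩
    exact hq _ ⟨by linarith, by linarith⟩ _ hy
  intro t ht
  rcases lt_trichotomy t x with htx | htx | htx
  · have : sSup (q '' Ioo x b) ≤ q t := by
      apply csSup_le hne
      rintro _ ⟨y, hy, rfl⟩
      exact hq _ ⟨ht.1, htx⟩ _ hy
    have s2 : sin (t - x) < 0 := sin_neg_of_neg_of_neg_pi_lt (by linarith) (by linarith [ht.1])
    simp only [q] at this
    rw [le_div_iff_of_neg s2] at this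
    linarith
  · subst htx; simp
  · have : q t ≤ sSup (q '' Ioo x b) := le_csSup hbdd ⟨t, ⟨htx, ht.2⟩, rfl⟩
    have s2 : 0 < sin (t - x) := sin_pos_of_pos_of_lt_pi (by linarith) (by linarith [ht.2])
    simp only [q] at this
    rw [div_le_iff₀ s2] at this
    linarith

/-- model density -/
noncomputable def gm (N : ℝ) (t : ℝ) : ℝ := (max (cos t) 0) ^ N

lemma gm_cont {N : ℝ} (hN : 1 ≤ N) : Continuous (gm N) := by
  unfold gm
  exact Continuous.rpow_const (by fun_prop) (fun x => Or.inr (by linarith))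

lemma gm_nonneg (N t : ℝ) : 0 ≤ gm N t := rpow_nonneg (le_max_right _ _) _

lemma gm_pos {N t : ℝ} (ht : t ∈ Ioo (-(π / 2)) (π / 2)) : 0 < gm N t :=
  rpow_pos_of_pos (lt_max_of_lt_left (cos_pos_of_mem_Ioo ht)) _

lemma gm_even (N t : ℝ) : gm N (-t) = gm N t := by simp [gm]

lemma gm_ratio {N : ℝ} (hN : 1 ≤ N) {u v : ℝ} (hu : -(π / 2) < u) (huv : u ≤ v) (hv : v < π / 2) :
    gm N v * (∫ t in (-(π / 2))..u, gm N t) ≤ gm N u * (∫ t in (-(π / 2))..v, gm N t) := by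
  have hi : ∀ p q, IntervalIntegrable (gm N) volume p q := fun p q =>
    (gm_cont hN).intervalIntegrable _ _
  have h1 : (∫ t in (-(π / 2))..u, gm N (t + (v - u))) ≤ ∫ t in (-(π / 2))..v, gm N t := by
    rw [intervalIntegral.integral_comp_add_right (fun t => gm N t)]
    rw [show u + (v - u) = v by ring]
    apply intervalIntegral.integral_mono_interval (by linarith) (by linarith) le_rfl
    · exact Filter.Eventually.of_forall (fun t => gm_nonneg N t)
    · exact hi _ _
  refine le_trans ?_ (mul_le_mul_of_nonneg_left h1 (gm_nonneg N u))
  rw [← intervalIntegral.integral_const_mul, ← intervalIntegral.integral_const_mul]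
  apply intervalIntegral.integral_mono_on hu.le
  · exact (continuous_const.mul (gm_cont hN)).intervalIntegrable _ _
  · exact Continuous.intervalIntegrable (continuous_const.mul ((gm_cont hN).comp (by fun_prop))) _ _
  intro t ht
  have c1 : 0 ≤ cos v := cos_nonneg_of_mem_Icc ⟨by linarith, by linarith⟩
  have c2 : 0 ≤ cos u := cos_nonneg_of_mem_Icc ⟨by linarith, by linarith⟩
  have c3 : 0 ≤ cos t := cos_nonneg_of_mem_Icc ⟨by linarith [ht.1], by linarith [ht.2]⟩
  have c4 : 0 ≤ cos (t + (v - u)) :=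
    cos_nonneg_of_mem_Icc ⟨by linarith [ht.1], by linarith [ht.2]⟩
  unfold gm
  rw [max_eq_left c1, max_eq_left c2, max_eq_left c3, max_eq_left c4, ← mul_rpow c1 c3,
    ← mul_rpow c2 c4]
  apply rpow_le_rpow (mul_nonneg c1 c3) _ (by linarith)
  have s1 : 0 ≤ sin (u - t) := sin_nonneg_of_nonneg_of_le_pi (by linarith [ht.2]) (by linarith [ht.1])
  have s2 : 0 ≤ sin (v - u) := sin_nonneg_of_nonneg_of_le_pi (by linarith) (by linarith)
  have e : cos u * cos (t + (v - u)) - cos v * cos t = sin (u - t) * sin (v - u) := by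
    have hv : v = u + (v - u) := by ring
    generalize v - u = d at *
    rw [hv, cos_add, cos_add, sin_sub]
    have := sin_sq_add_cos_sq u
    ring
  have := mul_nonneg s1 s2
  linarith

lemma hm_of {N : ℝ} {f : ℝ → ℝ} {a b : ℝ} (hconc : SinConcaveOn N f (Icc a b)) :
    ∀ x1 ∈ Icc a b, ∀ x2 ∈ Icc a b, x1 ≤ x2 → x2 - x1 < π →
      f x1 ^ (1 / N) + f x2 ^ (1 / N)
        ≤ 2 * cos ((x2 - x1) / 2) * f ((x1 + x2) / 2) ^ (1 / N) := by
  intro x1 h1 x2 h2 h12 hp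
  have := hconc x1 h1 x2 h2
  rw [abs_of_nonneg (by linarith)] at this
  have hc : 0 < cos ((x2 - x1) / 2) := cos_pos_of_mem_Ioo ⟨by linarith [pi_pos], by linarith⟩
  rw [div_le_iff₀ (by positivity)] at this
  linarith

lemma f_pos {N : ℝ} (hN : 1 ≤ N) {f : ℝ → ℝ} {a b : ℝ} (hlen : b - a ≤ π) (hab : a < b)
    (hfc : Continuous f) (hf0 : ∀ x, 0 ≤ f x) (hconc : SinConcaveOn N f (Icc a b))
    (hint : ∫ t in a..b, f t = 1) : ∀ x ∈ Ioo a b, 0 < f x := by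
  have hN' : 0 < 1 / N := by positivity
  have hhc : Continuous (fun t => f t ^ (1 / N)) :=
    hfc.rpow_const (fun x => Or.inr hN'.le)
  have hm := hm_of hconc
  obtain ⟨t0, ht0, hpos⟩ : ∃ t ∈ Ioo a b, 0 < f t := by
    by_contra hcon
    push Not at hcon
    have : ∫ t in a..b, f t ≤ ∫ t in a..b, (0 : ℝ) :=
      intervalIntegral.integral_mono_on_of_le_Ioo hab.le (hfc.intervalIntegrable _ _)
        (by simp) hcon
    simp [hint] at this
    linarith
  have hp0 : 0 < f t0 ^ (1 / N) := rpow_pos_of_pos hpos _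
  have h3 : ∀ w x y, a < w → w < x → x < y → y < b → 
      sin (y - x) * f w ^ (1 / N) + sin (x - w) * f y ^ (1 / N) ≤ sin (y - w) * f x ^ (1 / N) := by
    intro w x y h1 h2 h3 h4
    refine three_pt (fun t => f t ^ (1 / N)) w x y h2 h3 (by linarith) hhc.continuousOn ?_
    intro x1 i1 x2 i2 h12
    exact hm x1 ⟨by linarith [i1.1], by linarith [i1.2]⟩ x2 ⟨by linarith [i2.1], by linarith [i2.2]⟩
      h12 (by linarith [i1.1, i2.2])
  have hnn : ∀ t, 0 ≤ f t ^ (1 / N) := fun t => rpow_nonneg (hf0 t) _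
  have hsin : ∀ s t, a < s → s < t → t < b → 0 < sin (t - s) := fun s t h1 h2 h3 =>
    sin_pos_of_pos_of_lt_pi (by linarith) (by linarith)
  intro x hx
  rcases eq_or_lt_of_le (hf0 x) with hfx | hfx
  swap
  · exact hfx
  exfalso
  have hx0 : f x ^ (1 / N) = 0 := by rw [← hfx]; exact zero_rpow hN'.ne'
  rcases lt_trichotomy x t0 with h | h | h
  · have := h3 ((a + x) / 2) x t0 (by linarith [hx.1]) (by linarith [hx.1]) h ht0.2
    have p1 := mul_pos (hsin ((a + x) / 2) x (by linarith [hx.1]) (by linarith [hx.1]) hx.2) hp0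
    have p2 := mul_nonneg (hsin x t0 hx.1 h ht0.2).le (hnn ((a + x) / 2))
    rw [hx0] at this
    linarith
  · rw [h] at hfx; linarith
  · have := h3 t0 x ((x + b) / 2) ht0.1 h (by linarith [hx.2]) (by linarith [hx.2])
    have p1 := mul_pos (hsin x ((x + b) / 2) hx.1 (by linarith [hx.2]) (by linarith [hx.2])) hp0
    have p2 := mul_nonneg (hsin t0 x ht0.1 h hx.2).le (hnn ((x + b) / 2))
    rw [hx0] at this
    linarith

lemma fin_aux {C B gu gv Gu Gv : ℝ} (hgv : 0 ≤ gv) (hGv : 0 < Gv) (hB : 0 ≤ B)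
    (h1 : C * Gv ≤ B * Gu) (h2 : gv * Gu ≤ gu * Gv) : C * gv ≤ B * gu := by
  have a1 := mul_le_mul_of_nonneg_left h1 hgv
  have a2 := mul_le_mul_of_nonneg_left h2 hB
  have : (C * gv) * Gv ≤ (B * gu) * Gv := by linarith
  exact le_of_mul_le_mul_right this hGv

lemma G_pos {N : ℝ} (hN : 1 ≤ N) {u v : ℝ} (hu : -(π / 2) ≤ u) (huv : u < v) (hv : v ≤ π / 2) :
    0 < ∫ t in u..v, gm N t :=
  intervalIntegral.intervalIntegral_pos_of_pos_on ((gm_cont hN).intervalIntegrable _ _)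
    (fun t ht => gm_pos ⟨by linarith [ht.1], by linarith [ht.2]⟩) huv

lemma G_neg (N u : ℝ) : ∫ t in (-(π / 2))..(-u), gm N t = ∫ t in u..(π / 2), gm N t := by
  rw [← intervalIntegral.integral_comp_neg]
  simp [gm_even]

lemma core {N : ℝ} (hN : 1 ≤ N) {f : ℝ → ℝ} {a b : ℝ} (hlen : b - a ≤ π)
    (hfc : Continuous f) (hf0 : ∀ x, 0 ≤ f x) (hconc : SinConcaveOn N f (Icc a b))
    (hint : ∫ t in a..b, f t = 1) {C : ℝ} (hC : C * ∫ t in (-(π / 2))..(π / 2), gm N t = 1)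
    {x v : ℝ} (hx : x ∈ Ioo a b) (hv : v ∈ Ioo (-(π / 2)) (π / 2))
    (hxv : ∫ t in a..x, f t = C * ∫ t in (-(π / 2))..v, gm N t) : C * gm N v ≤ f x := by
  have hab : a < b := hx.1.trans hx.2
  have hN' : 0 < 1 / N := by positivity
  have hhc : Continuous (fun t => f t ^ (1 / N)) :=
    hfc.rpow_const (fun x => Or.inr hN'.le)
  have hm := hm_of hconc
  have hfx := f_pos hN hlen hab hfc hf0 hconc hint x hx
  obtain ⟨k, hk⟩ := support_exists (fun t => f t ^ (1 / N)) a b x hx.1 hx.2 hlen hhc hm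
  have hpow : ∀ t, f t = (f t ^ (1 / N)) ^ N := by
    intro t
    rw [← rpow_mul (hf0 t), one_div_mul_cancel (by linarith), rpow_one]
  have hH : 0 < f x ^ (1 / N) := rpow_pos_of_pos hfx _
  obtain ⟨H, hHdef⟩ : ∃ H, H = f x ^ (1 / N) := ⟨_, rfl⟩
  rw [← hHdef] at hk hH
  obtain ⟨u, hu⟩ : ∃ u, u = - arctan (k / H) := ⟨_, rfl⟩
  have hu1 : -(π / 2) < u := by rw [hu]; linarith [arctan_lt_pi_div_two (k / H)]
  have hu2 : u < π / 2 := by rw [hu]; linarith [neg_pi_div_two_lt_arctan (k / H)]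
  have hcu : 0 < cos u := cos_pos_of_mem_Ioo ⟨hu1, hu2⟩
  have hku : k = - H * (sin u / cos u) := by
    rw [← tan_eq_sin_div_cos, hu, tan_neg, tan_arctan]; field_simp
  obtain ⟨A, hA⟩ : ∃ A, A = H / cos u := ⟨_, rfl⟩
  have hApos : 0 < A := by rw [hA]; positivity
  have hk2 : ∀ t ∈ Ioo a b, f t ^ (1 / N) ≤ A * cos (t - (x - u)) := by
    intro t ht
    refine (hk t ht).trans_eq ?_
    rw [show t - (x - u) = (t - x) + u by ring, cos_add, hku, hA]
    field_simp
    ring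
  have hcos : ∀ t ∈ Ioo a b, 0 ≤ cos (t - (x - u)) := by
    intro t ht
    have := (rpow_nonneg (hf0 t) (1 / N)).trans (hk2 t ht)
    exact nonneg_of_mul_nonneg_right this hApos
  obtain ⟨B, hB⟩ : ∃ B, B = A ^ N := ⟨_, rfl⟩
  have hBpos : 0 < B := by rw [hB]; positivity
  have hbd : ∀ t ∈ Ioo a b, f t ≤ B * gm N (t - (x - u)) := by
    intro t ht
    rw [hpow t, gm, max_eq_left (hcos t ht), hB, ← mul_rpow hApos.le (hcos t ht)]
    exact rpow_le_rpow (rpow_nonneg (hf0 t) _) (hk2 t ht) (by linarith)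
  have hfxB : f x = B * gm N u := by
    rw [hpow x, gm, max_eq_left hcu.le, hB, ← mul_rpow hApos.le hcu.le, ← hHdef, hA]
    field_simp
  have ha' : -(π / 2) ≤ a - (x - u) := by
    by_contra hcon
    push Not at hcon
    have := hcos (((a - (x - u)) + -(π / 2)) / 2 + (x - u))
      ⟨by linarith, by linarith [hx.2]⟩
    rw [add_sub_cancel_right, ← cos_neg] at this
    have h2 := cos_neg_of_pi_div_two_lt_of_lt (x := -(((a - (x - u)) + -(π / 2)) / 2))
      (by linarith) (by linarith [hx.1, hx.2])
    linarith
  have hb' : b - (x - u) ≤ π / 2 := by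
    by_contra hcon
    push Not at hcon
    have := hcos (((b - (x - u)) + (π / 2)) / 2 + (x - u))
      ⟨by linarith [hx.1], by linarith⟩
    rw [add_sub_cancel_right] at this
    have h2 := cos_neg_of_pi_div_two_lt_of_lt (x := (((b - (x - u)) + (π / 2)) / 2))
      (by linarith) (by linarith [hx.1, hx.2])
    linarith
  have hgi : ∀ p q, IntervalIntegrable (gm N) volume p q := fun p q =>
    (gm_cont hN).intervalIntegrable _ _
  have hfi : ∀ p q, IntervalIntegrable f volume p q := fun p q => hfc.intervalIntegrable _ _
  have hsi : ∀ p q, IntervalIntegrable (fun t => B * gm N (t - (x - u))) volume p q := fun p q =>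
    Continuous.intervalIntegrable (continuous_const.mul ((gm_cont hN).comp (by fun_prop))) _ _
  have hgae : ∀ μ : Measure ℝ, 0 ≤ᵐ[μ] gm N := fun μ => Filter.Eventually.of_forall (gm_nonneg N)
  have hL : ∫ t in a..x, f t ≤ B * ∫ t in (-(π / 2))..u, gm N t := by
    calc ∫ t in a..x, f t ≤ ∫ t in a..x, B * gm N (t - (x - u)) :=
          intervalIntegral.integral_mono_on_of_le_Ioo hx.1.le (hfi _ _) (hsi _ _)
            (fun t ht => hbd t ⟨ht.1, ht.2.trans hx.2⟩)
      _ = B * ∫ t in (a - (x - u))..u, gm N t := by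
          rw [intervalIntegral.integral_const_mul,
            intervalIntegral.integral_comp_sub_right (fun t => gm N t), sub_sub_cancel]
      _ ≤ _ := by
          apply mul_le_mul_of_nonneg_left _ hBpos.le
          exact intervalIntegral.integral_mono_interval ha' (by linarith [hx.1]) le_rfl
            (hgae _) (hgi _ _)
  have hR : ∫ t in x..b, f t ≤ B * ∫ t in u..(π / 2), gm N t := by
    calc ∫ t in x..b, f t ≤ ∫ t in x..b, B * gm N (t - (x - u)) :=
          intervalIntegral.integral_mono_on_of_le_Ioo hx.2.le (hfi _ _) (hsi _ _)
            (fun t ht => hbd t ⟨hx.1.trans ht.1, ht.2⟩)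
      _ = B * ∫ t in u..(b - (x - u)), gm N t := by
          rw [intervalIntegral.integral_const_mul,
            intervalIntegral.integral_comp_sub_right (fun t => gm N t), sub_sub_cancel]
      _ ≤ _ := by
          apply mul_le_mul_of_nonneg_left _ hBpos.le
          exact intervalIntegral.integral_mono_interval le_rfl (by linarith [hx.2]) hb'
            (hgae _) (hgi _ _)
  rw [hfxB]
  rcases le_total u v with huv | hvu
  · refine fin_aux (gm_nonneg N v) (G_pos hN le_rfl hv.1 hv.2.le) hBpos.le (hxv ▸ hL) ?_
    exact gm_ratio hN hu1 huv hv.2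
  · have e1 := intervalIntegral.integral_add_adjacent_intervals (hfi a x) (hfi x b)
    have e2 := intervalIntegral.integral_add_adjacent_intervals (hgi (-(π / 2)) v) (hgi v (π / 2))
    have e3 : ∫ t in x..b, f t = C * ∫ t in v..(π / 2), gm N t := by
      rw [← e2] at hC
      linarith
    have := gm_ratio hN (u := -u) (v := -v) (by linarith) (by linarith) (by linarith [hv.1])
    rw [gm_even, gm_even, G_neg, G_neg] at this
    exact fin_aux (gm_nonneg N v) (G_pos hN hv.1.le hv.2 le_rfl) hBpos.le (e3 ▸ hR) this

lemma transport {N : ℝ} (hN : 1 ≤ N) {f : ℝ → ℝ} {a b : ℝ} (hlen : b - a ≤ π) (hab : a < b)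
    (hfc : Continuous f) (hf0 : ∀ x, 0 ≤ f x) (hconc : SinConcaveOn N f (Icc a b))
    (hint : ∫ t in a..b, f t = 1) {C : ℝ} (hCpos : 0 < C)
    (hC : ∫ t in (-(π / 2))..(π / 2), C * gm N t = 1) :
    ∃ S : ℝ → ℝ, ∀ x ∈ Ioo a b, S x ∈ Ioo (-(π / 2)) (π / 2) ∧
      HasDerivAt S (f x / (C * gm N (S x))) x ∧ C * gm N (S x) ≤ f x := by
  have hπ : -(π / 2) < π / 2 := by linarith [pi_pos]
  have hgi : ∀ p q, IntervalIntegrable (gm N) volume p q := fun p q =>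
    (gm_cont hN).intervalIntegrable _ _
  have hfi : ∀ p q, IntervalIntegrable f volume p q := fun p q => hfc.intervalIntegrable _ _
  rw [intervalIntegral.integral_const_mul] at hC
  obtain ⟨G, hG⟩ : ∃ G : ℝ → ℝ, G = fun v => C * ∫ t in (-(π / 2))..v, gm N t := ⟨_, rfl⟩
  have hGd : ∀ v, HasDerivAt G (C * gm N v) v := by
    intro v
    rw [hG]
    exact ((gm_cont hN).integral_hasStrictDerivAt _ v).hasDerivAt.const_mul C
  have hG0 : G (-(π / 2)) = 0 := by simp [hG]
  have hG1 : G (π / 2) = 1 := by rw [hG]; exact hC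
  have hGcont : Continuous G := continuous_iff_continuousAt.2 fun v => (hGd v).continuousAt
  have hGmono : StrictMonoOn G (Icc (-(π / 2)) (π / 2)) := by
    intro u hu v hv huv
    have := intervalIntegral.integral_add_adjacent_intervals (hgi (-(π / 2)) u) (hgi u v)
    simp only [hG]
    rw [← this]
    have := mul_pos hCpos (G_pos hN hu.1 huv hv.2)
    linarith
  have hex : ∀ p, ∃ v, p ∈ Ioo (0 : ℝ) 1 → v ∈ Ioo (-(π / 2)) (π / 2) ∧ G v = p := by
    intro p
    by_cases hp : p ∈ Ioo (0 : ℝ) 1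
    · have := intermediate_value_Ioo hπ.le hGcont.continuousOn
      rw [hG0, hG1] at this
      obtain ⟨v, hv, hvp⟩ := this hp
      exact ⟨v, fun _ => ⟨hv, hvp⟩⟩
    · exact ⟨0, fun h => absurd h hp⟩
  choose R hR using hex
  have hRmono : StrictMonoOn R (Ioo 0 1) := by
    intro p hp q hq hpq
    by_contra hcon
    push Not at hcon
    have := hGmono.monotoneOn (Ioo_subset_Icc_self (hR q hq).1) (Ioo_subset_Icc_self (hR p hp).1) hcon
    rw [(hR q hq).2, (hR p hp).2] at this
    linarith
  have hRim : Ioo (-(π / 2)) (π / 2) ⊆ R '' (Ioo 0 1) := by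
    intro v hv
    have hv' := Ioo_subset_Icc_self hv
    have h1 := hGmono (left_mem_Icc.2 hπ.le) hv' hv.1
    have h2 := hGmono hv' (right_mem_Icc.2 hπ.le) hv.2
    rw [hG0] at h1
    rw [hG1] at h2
    have hm : G v ∈ Ioo (0 : ℝ) 1 := ⟨h1, h2⟩
    exact ⟨G v, hm, hGmono.injOn (Ioo_subset_Icc_self (hR _ hm).1) hv' (hR _ hm).2⟩
  have hRd : ∀ p ∈ Ioo (0 : ℝ) 1, HasDerivAt R (C * gm N (R p))⁻¹ p := by
    intro p hp
    have hcont : ContinuousAt R p := hRmono.continuousAt_of_image_mem_nhds (Ioo_mem_nhds hp.1 hp.2)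
      (Filter.mem_of_superset (Ioo_mem_nhds (hR p hp).1.1 (hR p hp).1.2) hRim)
    refine HasDerivAt.of_local_left_inverse hcont (hGd (R p))
      (mul_pos hCpos (gm_pos (hR p hp).1)).ne' ?_
    filter_upwards [Ioo_mem_nhds hp.1 hp.2] with q hq using (hR q hq).2
  obtain ⟨F, hF⟩ : ∃ F : ℝ → ℝ, F = fun v => ∫ t in a..v, f t := ⟨_, rfl⟩
  have hFd : ∀ v, HasDerivAt F (f v) v := by
    intro v
    rw [hF]
    exact (hfc.integral_hasStrictDerivAt _ v).hasDerivAt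
  have hfp := f_pos hN hlen hab hfc hf0 hconc hint
  have hFm : ∀ x ∈ Ioo a b, F x ∈ Ioo (0 : ℝ) 1 := by
    intro x hx
    have h1 : 0 < ∫ t in a..x, f t := intervalIntegral.intervalIntegral_pos_of_pos_on (hfi _ _)
      (fun t ht => hfp t ⟨ht.1, ht.2.trans hx.2⟩) hx.1
    have h2 : 0 < ∫ t in x..b, f t := intervalIntegral.intervalIntegral_pos_of_pos_on (hfi _ _)
      (fun t ht => hfp t ⟨hx.1.trans ht.1, ht.2⟩) hx.2
    have := intervalIntegral.integral_add_adjacent_intervals (hfi a x) (hfi x b)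
    rw [hF]
    exact ⟨h1, by show ∫ t in a..x, f t < 1; linarith⟩
  refine ⟨fun x => R (F x), fun x hx => ?_⟩
  obtain ⟨h1, h2⟩ := hR _ (hFm x hx)
  refine ⟨h1, ?_, ?_⟩
  · have := (hRd _ (hFm x hx)).comp x (hFd x)
    rw [div_eq_inv_mul]
    exact this
  · apply core hN hlen hfc hf0 hconc hint hC hx h1
    rw [hG] at h2
    simp only at h2
    rw [h2, hF]

lemma integral_of_prob {φ : ℝ → ℝ} (hφ : Continuous φ) (h0 : ∀ x, 0 ≤ φ x) {a b : ℝ} (hab : a ≤ b)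
    (h : IsProbabilityMeasure
      ((volume.restrict (Icc a b)).withDensity (fun t => ENNReal.ofReal (φ t)))) :
    ∫ t in a..b, φ t = 1 := by
  have h1 := h.measure_univ
  rw [withDensity_apply _ MeasurableSet.univ, Measure.restrict_univ,
    ← ofReal_integral_eq_lintegral_ofReal hφ.continuousOn.integrableOn_Icc
      (Filter.Eventually.of_forall h0), ENNReal.ofReal_eq_one] at h1
  rw [intervalIntegral.integral_of_le hab, ← integral_Icc_eq_integral_Ioc, h1]

lemma main_incl {N : ℝ} (hN : 1 ≤ N) {f : ℝ → ℝ} {a b : ℝ} (hlen : b - a ≤ π) (hab : a < b)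
    (hfc : Continuous f) (hf0 : ∀ x, 0 ≤ f x) (hconc : SinConcaveOn N f (Icc a b))
    (hint : ∫ t in a..b, f t = 1) {C : ℝ} (hCpos : 0 < C)
    (hC : ∫ t in (-(π / 2))..(π / 2), C * gm N t = 1) :
    ∃ Φ : Set ℝ → Set ℝ, (∀ A, MeasurableSet A → MeasurableSet (Φ A) ∧
      Φ A ⊆ Icc (-(π / 2)) (π / 2) ∧
      ((volume.restrict (Icc (-(π / 2)) (π / 2))).withDensity
        (fun t => ENNReal.ofReal (C * gm N t))) (Φ A)
      = ((volume.restrict (Icc a b)).withDensity (fun t => ENNReal.ofReal (f t))) A) ∧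
      ∀ A B δ, (∀ x ∈ A, ∀ y ∈ B, δ ≤ |x - y|) → ∀ x ∈ Φ A, ∀ y ∈ Φ B, δ ≤ |x - y| := by
  obtain ⟨S, hS⟩ := transport hN hlen hab hfc hf0 hconc hint hCpos hC
  have hcont : ContinuousOn S (Ioo a b) := fun x hx => (hS x hx).2.1.continuousAt.continuousWithinAt
  have hgpos : ∀ x ∈ Ioo a b, 0 < C * gm N (S x) := fun x hx => mul_pos hCpos (gm_pos (hS x hx).1)
  have hexp : ∀ x ∈ Ioo a b, ∀ y ∈ Ioo a b, x ≤ y → y - x ≤ S y - S x := by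
    intro x hx y hy hxy
    have := (convex_Ioo a b).mul_sub_le_image_sub_of_le_deriv (f := S) hcont
      (by rw [interior_Ioo]; exact fun z hz => (hS z hz).2.1.differentiableAt.differentiableWithinAt)
      (C := 1) (by
        rw [interior_Ioo]
        intro z hz
        rw [(hS z hz).2.1.deriv, one_le_div (hgpos z hz)]
        exact (hS z hz).2.2) x hx y hy hxy
    linarith
  have hinj : InjOn S (Ioo a b) := by
    intro x hx y hy hxy
    rcases le_total x y with h | h
    · have := hexp x hx y hy h; linarith
    · have := hexp y hy x hx h; linarith
  refine ⟨fun A => S '' (A ∩ Ioo a b), ?_, ?_⟩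
  · intro A hA
    have hA' : MeasurableSet (A ∩ Ioo a b) := hA.inter measurableSet_Ioo
    have hm : MeasurableSet (S '' (A ∩ Ioo a b)) :=
      hA'.image_of_continuousOn_injOn (hcont.mono inter_subset_right) (hinj.mono inter_subset_right)
    have hsub : S '' (A ∩ Ioo a b) ⊆ Icc (-(π / 2)) (π / 2) := by
      rintro _ ⟨x, hx, rfl⟩
      exact Ioo_subset_Icc_self (hS x hx.2).1
    refine ⟨hm, hsub, ?_⟩
    rw [withDensity_apply _ hm, withDensity_apply _ hA, Measure.restrict_restrict hm,
      Measure.restrict_restrict hA, inter_eq_left.2 hsub,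
      lintegral_image_eq_lintegral_abs_deriv_mul hA'
        (fun x hx => (hS x hx.2).2.1.hasDerivWithinAt) (hinj.mono inter_subset_right)]
    have e : (A ∩ Icc a b : Set ℝ) =ᵐ[volume] (A ∩ Ioo a b : Set ℝ) :=
      (Filter.EventuallyEq.refl _ _).inter Ioo_ae_eq_Icc.symm
    rw [Measure.restrict_congr_set e]
    apply setLIntegral_congr_fun hA'
    intro x hx
    have hp := hgpos x hx.2
    show ENNReal.ofReal |f x / (C * gm N (S x))| * ENNReal.ofReal (C * gm N (S x))
      = ENNReal.ofReal (f x)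
    rw [← ENNReal.ofReal_mul (abs_nonneg _), abs_of_nonneg (div_nonneg (hf0 x) hp.le),
      div_mul_cancel₀ _ hp.ne']
  · rintro A B δ hd _ ⟨x, hx, rfl⟩ _ ⟨y, hy, rfl⟩
    refine (hd x hx.1 y hy.1).trans ?_
    rcases le_total x y with h | h
    · have := hexp x hx.2 y hy.2 h
      rw [abs_sub_comm, abs_sub_comm (S x), abs_of_nonneg (by linarith)]
      exact this.trans (le_abs_self _)
    · have := hexp y hy.2 x hx.2 h
      rw [abs_of_nonneg (by linarith)]
      exact this.trans (le_abs_self _)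

theorem stmt_4 (N : ℝ) (hN : 1 ≤ N)
    (a b : ℝ) (hab : a ≤ b) (hlen : b - a ≤ π)
    (f : ℝ → ℝ) (hf0 : ∀ x ∈ Icc a b, 0 ≤ f x)
    (hfc : ContinuousOn f (Icc a b)) (hconc : SinConcaveOn N f (Icc a b))
    (ν : Measure ℝ)
    (hν : ν = (volume.restrict (Icc a b)).withDensity (fun t => ENNReal.ofReal (f t)))
    (hνprob : IsProbabilityMeasure ν)
    (C₁ : ℝ) (hC₁ : 0 < C₁) (ν₁ : Measure ℝ)
    (hν₁ : ν₁ = (volume.restrict (Icc (-(π / 2)) (π / 2))).withDensity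
      (fun t => ENNReal.ofReal (C₁ * Real.cos t ^ N)))
    (hν₁prob : IsProbabilityMeasure ν₁)
    (κ1 κ2 : ℝ) (hκ1 : κ1 ∈ Icc (0 : ℝ) 1) (hκ2 : κ2 ∈ Icc (0 : ℝ) 1)
    (hκ1half : κ1 ≤ 1 / 2) (hκ2half : 1 / 2 ≤ κ2) :
    sep ν (Icc a b) κ1 κ2 ≤ sep ν₁ (Icc (-(π / 2)) (π / 2)) κ1 κ2 := by
  rcases hab.eq_or_lt with hab' | hab'
  · exfalso
    have h1 := hνprob.measure_univ
    rw [hν, withDensity_apply _ MeasurableSet.univ, ← hab'] at h1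
    simp at h1
  obtain ⟨F, hF⟩ : ∃ F : ℝ → ℝ, F = fun t => f (projIcc a b hab t) := ⟨_, rfl⟩
  have hFf : ∀ t ∈ Icc a b, F t = f t := by
    intro t ht
    simp [hF, projIcc_of_mem hab ht]
  have hFc : Continuous F := by
    rw [hF]
    exact (continuousOn_iff_continuous_restrict.1 hfc).comp continuous_projIcc
  have hF0 : ∀ x, 0 ≤ F x := fun x => by rw [hF]; exact hf0 _ (projIcc a b hab x).2
  have hFconc : SinConcaveOn N F (Icc a b) := by
    intro x1 h1 x2 h2
    rw [hFf _ h1, hFf _ h2, hFf]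
    · exact hconc x1 h1 x2 h2
    · exact ⟨by linarith [h1.1, h2.1], by linarith [h1.2, h2.2]⟩
  have hν' : ν = (volume.restrict (Icc a b)).withDensity (fun t => ENNReal.ofReal (F t)) := by
    rw [hν]
    apply withDensity_congr_ae
    filter_upwards [ae_restrict_mem measurableSet_Icc] with t ht
    rw [hFf t ht]
  have hν₁' : ν₁ = (volume.restrict (Icc (-(π / 2)) (π / 2))).withDensity
      (fun t => ENNReal.ofReal (C₁ * gm N t)) := by
    rw [hν₁]
    apply withDensity_congr_ae
    filter_upwards [ae_restrict_mem measurableSet_Icc] with t ht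
    rw [gm, max_eq_left (cos_nonneg_of_mem_Icc ht)]
  have hint := integral_of_prob hFc hF0 hab (hν' ▸ hνprob)
  have hint₁ := integral_of_prob (φ := fun t => C₁ * gm N t) (continuous_const.mul (gm_cont hN))
    (fun x => mul_nonneg hC₁.le (gm_nonneg N x)) (by linarith [pi_pos]) (hν₁' ▸ hν₁prob)
  obtain ⟨Φ, hΦ, hΦd⟩ := main_incl hN hlen hab' hFc hF0 hFconc hint hC₁ hint₁
  rw [← hν', ← hν₁'] at hΦ
  unfold sep
  rcases hκ1.1.eq_or_lt with h0 | h0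
  · subst h0
    have hno : ¬ BddAbove {δ : ℝ | 0 ≤ δ ∧ ∃ A1 A2 : Set ℝ, MeasurableSet A1 ∧ MeasurableSet A2 ∧
        A1 ⊆ Icc a b ∧ A2 ⊆ Icc a b ∧ ENNReal.ofReal 0 ≤ ν A1 ∧ ENNReal.ofReal κ2 ≤ ν A2 ∧
        ∀ a1 ∈ A1, ∀ a2 ∈ A2, δ ≤ |a1 - a2|} := by
      rintro ⟨M, hM⟩
      have hI : ν (Icc a b) = 1 := by
        rw [← hνprob.measure_univ, hν, withDensity_apply _ MeasurableSet.univ,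
          withDensity_apply _ measurableSet_Icc, Measure.restrict_restrict measurableSet_Icc]
        simp
      have := hM (a := |M| + 1) ⟨by positivity, ∅, Icc a b, MeasurableSet.empty, measurableSet_Icc,
        empty_subset _, subset_rfl, by simp, by
          rw [hI]; exact ENNReal.ofReal_le_one.2 hκ2.2, by simp⟩
      linarith [le_abs_self M]
    rw [Real.sSup_of_not_bddAbove hno]
    exact Real.sSup_nonneg (fun x hx => hx.1)
  · apply Real.sSup_le
    · rintro δ ⟨hδ, A1, A2, m1, m2, s1, s2, k1, k2, hd⟩
      apply le_csSup
      · refine ⟨π, ?_⟩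
        rintro δ' ⟨hδ', B1, B2, n1, n2, t1, t2, l1, l2, hd'⟩
        have p1 : 0 < ν₁ B1 := lt_of_lt_of_le (ENNReal.ofReal_pos.2 h0) l1
        have p2 : 0 < ν₁ B2 := lt_of_lt_of_le (ENNReal.ofReal_pos.2 (by linarith)) l2
        obtain ⟨x, hx⟩ := nonempty_of_measure_ne_zero p1.ne'
        obtain ⟨y, hy⟩ := nonempty_of_measure_ne_zero p2.ne'
        refine (hd' x hx y hy).trans ?_
        rw [abs_le]
        constructor <;> linarith [(t1 hx).1, (t1 hx).2, (t2 hy).1, (t2 hy).2]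
      · refine ⟨hδ, Φ A1, Φ A2, (hΦ A1 m1).1, (hΦ A2 m2).1, (hΦ A1 m1).2.1, (hΦ A2 m2).2.1, ?_, ?_,
          hΦd A1 A2 δ hd⟩
        · rw [(hΦ A1 m1).2.2]; exact k1
        · rw [(hΦ A2 m2).2.2]; exact k2
    · exact Real.sSup_nonneg (fun x hx => hx.1)
end
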